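/- arXiv:2004.10088 — 3 statements merged into one kernel-verified Lean document; each statement's English description precedes it below -/
import Mathlib

section
/- For every real number c > 0, the function ψ(x) = Q_c(x)^{3/2} satisfies, for all x ∈ ℝ, -ψ''(x) + (9c/4)·ψ(x) - 2·Q_c(x)·ψ(x) = 0. -/
/-! With `k = √c / 2`, positivity of `cosh` gives `ψ = A · cosh(k x)⁻³`, where `A = (3c/2)^{3/2}`.
Differentiating twice and using `sinh² = cosh² - 1`,
`ψ'' = A k² (12 sinh² cosh⁻⁵ - 3 cosh⁻³) = 9 k² ψ - 12 k² cosh⁻² ψ`,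
and the claim follows from `9 k² = 9c/4` and `12 k² cosh⁻² = 3c cosh⁻² = 2 Q_c`. -/

/-- The line solitary wave profile of the Zakharov--Kuznetsov equation:
`Q c x = (3c/2) * (cosh(√c·x/2))⁻²`. -/
noncomputable def Q (c x : ℝ) : ℝ := (3 * c / 2) * (Real.cosh (Real.sqrt c * x / 2) ^ 2)⁻¹

theorem Q_rpow_eq (c : ℝ) (hc : 0 < c) (x : ℝ) :
    (Q c x) ^ ((3 : ℝ) / 2) =
      (3 * c / 2) ^ ((3 : ℝ) / 2) / Real.cosh (Real.sqrt c * x / 2) ^ 3 := by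
  have hC := Real.cosh_pos (Real.sqrt c * x / 2)
  have h3 : (Real.cosh (Real.sqrt c * x / 2) ^ 2) ^ ((3 : ℝ) / 2)
      = Real.cosh (Real.sqrt c * x / 2) ^ 3 := by
    rw [← Real.rpow_natCast, ← Real.rpow_natCast, ← Real.rpow_mul hC.le]
    norm_num
  rw [Q, Real.mul_rpow (by positivity) (by positivity), Real.inv_rpow (by positivity), h3,
    ← div_eq_mul_inv]

/-- For every `c > 0`, the function `ψ = Q_c^{3/2}` satisfies
`-ψ'' + (9c/4)·ψ - 2·Q_c·ψ = 0`. -/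
theorem Q_pow_three_halves_equation (c : ℝ) (hc : 0 < c)
    (ψ : ℝ → ℝ) (hψ : ∀ x : ℝ, ψ x = (Q c x) ^ ((3 : ℝ) / 2)) :
    ∀ x : ℝ, -(deriv (deriv ψ) x) + (9 * c / 4) * ψ x - 2 * Q c x * ψ x = 0 := by
  obtain ⟨A, hA⟩ : ∃ A : ℝ, A = (3 * c / 2) ^ ((3 : ℝ) / 2) := ⟨_, rfl⟩
  have hψ' : ψ = fun x => A / Real.cosh (Real.sqrt c * x / 2) ^ 3 := by
    funext x
    rw [hψ, Q_rpow_eq c hc, hA]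
  have hs : Real.sqrt c ^ 2 = c := Real.sq_sqrt hc.le
  have hlin (x : ℝ) : HasDerivAt (fun y => Real.sqrt c * y / 2) (Real.sqrt c / 2) x := by
    simpa using ((hasDerivAt_id x).const_mul (Real.sqrt c)).div_const 2
  have hne (x : ℝ) : Real.cosh (Real.sqrt c * x / 2) ≠ 0 := (Real.cosh_pos _).ne'
  have h1 : deriv ψ = fun x => -(3 * A * (Real.sqrt c / 2)) *
      Real.sinh (Real.sqrt c * x / 2) / Real.cosh (Real.sqrt c * x / 2) ^ 4 := by
    funext x
    rw [hψ']
    refine HasDerivAt.deriv ?_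
    refine ((hasDerivAt_const x A).fun_div ((hlin x).cosh.fun_pow 3)
      (pow_ne_zero 3 (hne x))).congr_deriv ?_
    have := hne x
    field_simp
    ring
  intro x
  have h2 : deriv (deriv ψ) x = -(3 * A * (Real.sqrt c / 2)) * (Real.sqrt c / 2) *
      (Real.cosh (Real.sqrt c * x / 2) ^ 2 - 4 * Real.sinh (Real.sqrt c * x / 2) ^ 2) /
        Real.cosh (Real.sqrt c * x / 2) ^ 5 := by
    rw [h1]
    refine HasDerivAt.deriv ?_
    refine (((hlin x).sinh.const_mul (-(3 * A * (Real.sqrt c / 2)))).fun_div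
      ((hlin x).cosh.fun_pow 4) (pow_ne_zero 4 (hne x))).congr_deriv ?_
    have := hne x
    field_simp
    ring
  have hψx : ψ x = A / Real.cosh (Real.sqrt c * x / 2) ^ 3 := congrFun hψ' x
  have hC := hne x
  rw [h2, hψx, Q, Real.sinh_sq]
  generalize Real.cosh (Real.sqrt c * x / 2) = C at *
  field_simp
  rw [hs]
  ring
end

section
/- Let L > 0, let c > 0 and let n be a positive integer. The function φ(x,y) = Q_c(x)^{3/2}·cos(ny/L) satisfies -Δφ + c·φ - 2·Q_c(x)·φ = 0 for all (x,y) ∈ ℝ² if and only if c = 4n²/(5L²). (This characterizes the critical speeds at which the linearized operator acquires extra kernel elements.) -/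
lemma Q_rpow (c x : ℝ) (hc : 0 < c) :
    (Q c x) ^ ((3 : ℝ) / 2)
      = (3 * c / 2) ^ ((3 : ℝ) / 2) * (Real.cosh (Real.sqrt c / 2 * x) ^ 3)⁻¹ := by
  have h := Real.cosh_pos (Real.sqrt c / 2 * x)
  have e : Real.sqrt c * x / 2 = Real.sqrt c / 2 * x := by ring
  rw [Q, e, Real.mul_rpow (by positivity) (by positivity), Real.inv_rpow (by positivity),
    ← Real.rpow_natCast, ← Real.rpow_mul h.le, ← Real.rpow_natCast]
  norm_num

/-- The second derivative of `cosh(a x)⁻³`, scaled by constants. -/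
lemma deriv_deriv_cosh (a K C x : ℝ) :
    deriv (deriv (fun s => K * (Real.cosh (a * s) ^ 3)⁻¹ * C)) x
      = (9 * a ^ 2 - 12 * a ^ 2 * (Real.cosh (a * x) ^ 2)⁻¹)
        * (K * (Real.cosh (a * x) ^ 3)⁻¹ * C) := by
  have hlin (s : ℝ) : HasDerivAt (fun s => a * s) a s := by
    simpa using (hasDerivAt_id s).const_mul a
  have h1 : deriv (fun s => K * (Real.cosh (a * s) ^ 3)⁻¹ * C)
      = fun s => -3 * a * K * C * (Real.sinh (a * s) * (Real.cosh (a * s) ^ 4)⁻¹) := by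
    funext s
    have h := (Real.cosh_pos (a * s)).ne'
    have := ((((hlin s).cosh.pow 3).inv (pow_ne_zero 3 h)).const_mul K).mul_const C
    refine this.deriv.trans ?_
    simp only [Pi.pow_apply]
    field_simp
    push_cast
    ring
  rw [h1]
  have h := (Real.cosh_pos (a * x)).ne'
  have := (((hlin x).sinh.mul (((hlin x).cosh.pow 4).inv (pow_ne_zero 4 h))).const_mul
    (-3 * a * K * C))
  refine this.deriv.trans ?_
  have hs := Real.sinh_sq (a * x)
  simp only [Pi.pow_apply, Pi.inv_apply]
  field_simp
  push_cast
  ring_nf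
  rw [hs]
  ring

lemma deriv_deriv_cos (A b y : ℝ) :
    deriv (deriv (fun s => A * Real.cos (b * s))) y = -b ^ 2 * (A * Real.cos (b * y)) := by
  have hlin (s : ℝ) : HasDerivAt (fun s => b * s) b s := by
    simpa using (hasDerivAt_id s).const_mul b
  have h1 : deriv (fun s => A * Real.cos (b * s)) = fun s => -A * b * Real.sin (b * s) := by
    funext s
    refine ((hlin s).cos.const_mul A).deriv.trans ?_
    ring
  rw [h1]
  refine ((hlin y).sin.const_mul (-A * b)).deriv.trans ?_
  ring

/-- For `L > 0`, `c > 0` and a positive integer `n`, the function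
`φ(x,y) = Q_c(x)^{3/2}·cos(ny/L)` satisfies `-Δφ + c·φ - 2·Q_c·φ = 0` on `ℝ²`
if and only if `c = 4n²/(5L²)`: the critical speeds are exactly the speeds at which
the linearized operator acquires extra kernel elements. -/
theorem critical_speed_characterization (L c : ℝ) (hL : 0 < L) (hc : 0 < c)
    (n : ℕ) (hn : 0 < n) (φ : ℝ → ℝ → ℝ)
    (hφ : ∀ x y : ℝ, φ x y = (Q c x) ^ ((3 : ℝ) / 2) * Real.cos ((n : ℝ) * y / L)) :
    (∀ x y : ℝ,
      -(deriv (deriv (fun s => φ s y)) x + deriv (deriv (φ x)) y)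
        + c * φ x y - 2 * Q c x * φ x y = 0)
      ↔ c = 4 * (n : ℝ) ^ 2 / (5 * L ^ 2) := by
  have hx (y : ℝ) : (fun s => φ s y) = fun s => (3 * c / 2) ^ ((3 : ℝ) / 2)
      * (Real.cosh (Real.sqrt c / 2 * s) ^ 3)⁻¹ * Real.cos ((n : ℝ) * y / L) := by
    funext s
    rw [hφ, Q_rpow c s hc]
  have hy (x : ℝ) : φ x = fun s => (Q c x) ^ ((3 : ℝ) / 2) * Real.cos ((n : ℝ) / L * s) := by
    funext s
    rw [hφ]
    congr 2
    ring
  have hsq : (Real.sqrt c / 2) ^ 2 = c / 4 := by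
    rw [div_pow, Real.sq_sqrt hc.le]
    norm_num
  have key (x y : ℝ) : -(deriv (deriv (fun s => φ s y)) x + deriv (deriv (φ x)) y)
      + c * φ x y - 2 * Q c x * φ x y = ((n : ℝ) ^ 2 / L ^ 2 - 5 * c / 4) * φ x y := by
    have e1 : deriv (deriv (fun s => φ s y)) x = (9 * c / 4 - 2 * Q c x) * φ x y := by
      have e : Real.sqrt c * x / 2 = Real.sqrt c / 2 * x := by ring
      rw [hx, deriv_deriv_cosh, hφ x y, Q_rpow c x hc, hsq, Q, e]
      ring
    have e2 : deriv (deriv (φ x)) y = -((n : ℝ) / L) ^ 2 * φ x y := by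
      rw [hy, deriv_deriv_cos]
    rw [e1, e2]
    ring
  have h0 : φ 0 0 ≠ 0 := by
    have hQ : 0 < Q c 0 := by
      simp [Q, hc]
    rw [hφ]
    simpa using (Real.rpow_pos_of_pos hQ _).ne'
  have hiff : (n : ℝ) ^ 2 / L ^ 2 - 5 * c / 4 = 0 ↔ c = 4 * (n : ℝ) ^ 2 / (5 * L ^ 2) := by
    have e : 4 * (n : ℝ) ^ 2 / (5 * L ^ 2) = 4 / 5 * ((n : ℝ) ^ 2 / L ^ 2) := by
      field_simp
    rw [e]
    constructor <;> intro h <;> linarith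
  rw [← hiff]
  constructor
  · intro h
    have := h 0 0
    rw [key] at this
    exact (mul_eq_zero.mp this).resolve_right h0
  · intro h x y
    rw [key, h, zero_mul]
end

section
/- Fix c* > 0 and L > 0. For any function u : ℝ² → ℝ that is smooth, 2πL-periodic in y, and compactly supported in x (there is R > 0 with u(x,y) = 0 whenever |x| ≥ R), define 𝒜u = ∂_x(-Δu + c*·u - 2·Q_{c*}(x)·u) + μ(u)·∂_x Q_{c*}, where μ(u) = (u, 𝕃_{c*}∂_x²Q_{c*})_{L²} / ‖∂_x Q_{c*}‖_{L²}², with all L² pairings taken over ℝ×(0,2πL). Then (𝒜u, ∂_x Q_{c*})_{L²} = 0 and (𝒜u, Q_{c*})_{L²} = 0. (These are the identities from which Lemma 3.1 concludes that solutions of u_t = 𝒜u preserve the inner products (u, ∂_x Q_{c*})_{L²} and (u, Q_{c*})_{L²}.) -/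
/-! The proof integrates out the transverse variable. With `U(x) = ∫ u(x,y) dy` over one period,
differentiation under the integral sign and periodicity (which removes the `∂_y²` term) give
`∫ 𝒜u(x,y) dy = G'(x) + 2πL·μ·Q'(x)` where `G = -U'' + cU - 2QU` has compact support. Integrating
by parts on the line three times (`weak_form`), for every smooth `ψ`,
`∫ G'ψ = -∫ U·(-ψ''' + cψ' - 2Qψ')`.

* For `ψ = Q'` the right-hand side is the negative of the numerator of `μ`, and the term
  `μ·2πL·∫ Q'²` cancels it; this needs `0 < ∫ Q'²` and its finiteness, which follow from the decay
  `Q = O((1 + cx²/4)⁻¹)` and the boundedness of `Q'/Q`.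
* For `ψ = Q` the profile equation `-Q'' + cQ - Q² = 0`, differentiated once, says that
  `-Q''' + cQ' - 2QQ' = 0`, so the right-hand side vanishes; and `∫ Q'Q = 0` because `Q'Q` is odd. -/


open MeasureTheory intervalIntegral

open Real Set Filter Topology
open scoped ContDiff

/-! ### The solitary wave profile -/

lemma Q_contDiff (c : ℝ) : ContDiff ℝ ∞ (Q c) := by
  have h1 : ContDiff ℝ ∞ (fun x : ℝ => Real.cosh (Real.sqrt c * x / 2) ^ 2) :=
    (Real.contDiff_cosh.comp ((contDiff_const.mul contDiff_id).div_const 2)).pow 2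
  exact contDiff_const.mul (h1.inv fun x => (pow_pos (Real.cosh_pos _) 2).ne')

lemma Q_pos {c : ℝ} (hc : 0 < c) (x : ℝ) : 0 < Q c x := by
  have := Real.cosh_pos (Real.sqrt c * x / 2)
  unfold Q; positivity

lemma Q_neg (c x : ℝ) : Q c (-x) = Q c x := by
  unfold Q
  rw [show Real.sqrt c * -x / 2 = -(Real.sqrt c * x / 2) by ring, Real.cosh_neg]

lemma hasDerivAt_theta (c x : ℝ) :
    HasDerivAt (fun x : ℝ => Real.sqrt c * x / 2) (Real.sqrt c / 2) x := by
  simpa using ((hasDerivAt_id x).const_mul (Real.sqrt c)).div_const 2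

lemma Q_hasDerivAt (c x : ℝ) :
    HasDerivAt (Q c) (-(Real.sqrt c * Real.sinh (Real.sqrt c * x / 2) /
      Real.cosh (Real.sqrt c * x / 2)) * Q c x) x := by
  have hC := (Real.cosh_pos (Real.sqrt c * x / 2)).ne'
  have h := ((((hasDerivAt_theta c x).cosh).pow 2).inv (pow_ne_zero 2 hC)).const_mul (3 * c / 2)
  refine HasDerivAt.congr_deriv h ?_
  unfold Q
  simp
  field_simp

lemma deriv_Q (c : ℝ) : deriv (Q c) = fun x => -(Real.sqrt c * Real.sinh (Real.sqrt c * x / 2) /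
      Real.cosh (Real.sqrt c * x / 2)) * Q c x :=
  funext fun x => (Q_hasDerivAt c x).deriv

/-- The profile equation `-Q'' + cQ - Q² = 0`. -/
lemma deriv2_Q {c : ℝ} (hc : 0 < c) : deriv (deriv (Q c)) = fun x => c * Q c x - Q c x ^ 2 := by
  funext x
  have hC := (Real.cosh_pos (Real.sqrt c * x / 2)).ne'
  have h := ((((hasDerivAt_theta c x).sinh.const_mul (Real.sqrt c)).div
    (hasDerivAt_theta c x).cosh hC).neg).mul (Q_hasDerivAt c x)
  rw [deriv_Q]
  refine h.deriv.trans ?_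
  have hs : Real.sqrt c ^ 2 = c := Real.sq_sqrt hc.le
  have hcs := Real.cosh_sq (Real.sqrt c * x / 2)
  have hQ : Q c x * Real.cosh (Real.sqrt c * x / 2) ^ 2 = 3 * c / 2 := by
    unfold Q; field_simp
  simp only [Pi.neg_apply, Pi.div_apply]
  generalize Real.cosh (Real.sqrt c * x / 2) = C at *
  generalize Real.sinh (Real.sqrt c * x / 2) = S at *
  generalize Q c x = q at *
  generalize Real.sqrt c = s at *
  field_simp
  have hS : S ^ 2 = C ^ 2 - 1 := by linarith
  subst hs
  ring_nf
  rw [hS]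
  linear_combination (2 * q) * hQ

/-- The linearized operator annihilates `Q'`. -/
lemma linearized_deriv_Q {c : ℝ} (hc : 0 < c) (x : ℝ) :
    -(deriv (deriv (deriv (Q c))) x) + c * deriv (Q c) x - 2 * Q c x * deriv (Q c) x = 0 := by
  have hd : HasDerivAt (Q c) (deriv (Q c) x) x :=
    ((Q_contDiff c).differentiable (by simp) x).hasDerivAt
  have h := ((hd.const_mul c).sub (hd.pow 2)).deriv
  have h' : deriv (deriv (deriv (Q c))) x = c * deriv (Q c) x - 2 * Q c x * deriv (Q c) x := by
    rw [deriv2_Q hc]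
    refine h.trans ?_
    simp
  rw [h']; ring

lemma Q_integrable {c : ℝ} (hc : 0 < c) : Integrable (Q c) := by
  have hs : Real.sqrt c / 2 ≠ 0 := by positivity
  have h := (integrable_inv_one_add_sq.comp_mul_left' hs).const_mul (3 * c / 2)
  refine h.mono' (Q_contDiff c).continuous.aestronglyMeasurable (ae_of_all _ fun x => ?_)
  rw [Real.norm_of_nonneg (Q_pos hc x).le]
  unfold Q
  have hle : 1 + (Real.sqrt c / 2 * x) ^ 2 ≤ Real.cosh (Real.sqrt c * x / 2) ^ 2 := by
    rw [Real.cosh_sq, show Real.sqrt c / 2 * x = Real.sqrt c * x / 2 by ring, add_comm]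
    gcongr 1
    · rw [sq_le_sq, Real.abs_sinh]
      exact Real.self_le_sinh_iff.2 (abs_nonneg _)
  gcongr

lemma abs_deriv_Q_le {c : ℝ} (hc : 0 < c) (x : ℝ) : |deriv (Q c) x| ≤ Real.sqrt c * Q c x := by
  have hC := Real.cosh_pos (Real.sqrt c * x / 2)
  have hle : |Real.sinh (Real.sqrt c * x / 2)| ≤ Real.cosh (Real.sqrt c * x / 2) :=
    abs_le_of_sq_le_sq (by rw [Real.cosh_sq]; linarith) hC.le
  rw [deriv_Q]
  simp only [abs_mul, abs_neg, abs_div, abs_of_pos hC, abs_of_pos (Q_pos hc x),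
    abs_of_nonneg (Real.sqrt_nonneg c)]
  have := (Q_pos hc x).le
  gcongr
  rw [div_le_iff₀ hC]
  gcongr

lemma Q_le {c : ℝ} (hc : 0 < c) (x : ℝ) : Q c x ≤ 3 * c / 2 := by
  unfold Q
  have : 1 ≤ Real.cosh (Real.sqrt c * x / 2) ^ 2 := one_le_pow₀ (Real.one_le_cosh _)
  exact mul_le_of_le_one_right (by positivity) (inv_le_one_of_one_le₀ this)

lemma deriv_Q_continuous (c : ℝ) : Continuous (deriv (Q c)) :=
  (Q_contDiff c).continuous_deriv (by simp)

lemma deriv_Q_mul_integrable {c : ℝ} (hc : 0 < c) {φ : ℝ → ℝ} (hφ : Continuous φ) {M : ℝ}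
    (hM : ∀ x, |φ x| ≤ M) : Integrable (fun x => deriv (Q c) x * φ x) := by
  refine ((Q_integrable hc).const_mul (Real.sqrt c * M)).mono'
    ((deriv_Q_continuous c).mul hφ).aestronglyMeasurable (ae_of_all _ fun x => ?_)
  rw [Real.norm_eq_abs, abs_mul]
  calc _ ≤ (Real.sqrt c * Q c x) * M :=
        mul_le_mul (abs_deriv_Q_le hc x) (hM x) (abs_nonneg _)
          (mul_nonneg (Real.sqrt_nonneg c) (Q_pos hc x).le)
    _ = _ := by ring

lemma deriv_Q_mul_Q_integrable {c : ℝ} (hc : 0 < c) :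
    Integrable (fun x => deriv (Q c) x * Q c x) :=
  deriv_Q_mul_integrable hc (Q_contDiff c).continuous (M := 3 * c / 2)
    fun x => by rw [abs_of_pos (Q_pos hc x)]; exact Q_le hc x

lemma deriv_Q_sq_integrable {c : ℝ} (hc : 0 < c) :
    Integrable (fun x => deriv (Q c) x * deriv (Q c) x) :=
  deriv_Q_mul_integrable hc (deriv_Q_continuous c) (M := Real.sqrt c * (3 * c / 2))
    fun x => (abs_deriv_Q_le hc x).trans
      (mul_le_mul_of_nonneg_left (Q_le hc x) (Real.sqrt_nonneg c))

lemma integral_deriv_Q_sq_pos {c : ℝ} (hc : 0 < c) :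
    0 < ∫ x, deriv (Q c) x * deriv (Q c) x := by
  refine integral_pos_of_integrable_nonneg_nonzero (x := 1)
    ((deriv_Q_continuous c).mul (deriv_Q_continuous c)) (deriv_Q_sq_integrable hc)
    (fun x => mul_self_nonneg _) ?_
  have h1 := Q_pos hc 1
  have h2 : 0 < Real.sinh (Real.sqrt c * 1 / 2) := Real.sinh_pos_iff.2 (by positivity)
  have h3 := Real.cosh_pos (Real.sqrt c * 1 / 2)
  have h4 := Real.sqrt_pos.2 hc
  rw [deriv_Q]
  refine mul_self_ne_zero.2 (mul_ne_zero (neg_ne_zero.2 ?_) h1.ne')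
  positivity

lemma integral_deriv_Q_mul_Q (c : ℝ) : ∫ x, deriv (Q c) x * Q c x = 0 := by
  have h := integral_neg_eq_self (fun x => deriv (Q c) x * Q c x) volume
  have h2 : (fun x => deriv (Q c) (-x) * Q c (-x)) = fun x => -(deriv (Q c) x * Q c x) := by
    funext x
    rw [deriv_Q]
    simp only [Q_neg]
    rw [show Real.sqrt c * -x / 2 = -(Real.sqrt c * x / 2) by ring, Real.cosh_neg, Real.sinh_neg]
    ring
  rw [h2, MeasureTheory.integral_neg] at h
  linarith

/-! ### Integration by parts on the line -/

lemma integral_deriv_mul_of_compact {f f' φ φ' : ℝ → ℝ} (hf : ∀ x, HasDerivAt f (f' x) x)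
    (hfs : HasCompactSupport f) (hf' : Continuous f') (hφ : ∀ x, HasDerivAt φ (φ' x) x)
    (hφ' : Continuous φ') : ∫ x, f' x * φ x = -∫ x, f x * φ' x := by
  have hfc : Continuous f := continuous_iff_continuousAt.2 fun x => (hf x).continuousAt
  have hφc : Continuous φ := continuous_iff_continuousAt.2 fun x => (hφ x).continuousAt
  have hfs' : HasCompactSupport f' := by
    rw [show f' = deriv f from funext fun x => (hf x).deriv.symm]; exact hfs.deriv
  have := integral_mul_deriv_eq_deriv_mul_of_integrable (fun x _ => hf x) (fun x _ => hφ x)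
    ((hfc.mul hφ').integrable_of_hasCompactSupport hfs.mul_right)
    ((hf'.mul hφc).integrable_of_hasCompactSupport hfs'.mul_right)
    ((hfc.mul hφc).integrable_of_hasCompactSupport hfs.mul_right)
  rw [this, neg_neg]

/-- Testing `∂ₓ(-U'' + cU - 2qU)` against a smooth `ψ` moves the operator `-∂ₓ² + c - 2q` onto
`ψ'`, when `U` has compact support. -/
lemma weak_form {c : ℝ} {ψ q U U1 U2 G1 : ℝ → ℝ} (hψ : ContDiff ℝ ∞ ψ) (hq : Continuous q)
    (hU : HasCompactSupport U) (hU1 : ∀ x, HasDerivAt U (U1 x) x)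
    (hU2 : ∀ x, HasDerivAt U1 (U2 x) x) (hU2c : Continuous U2)
    (hG : ∀ x, HasDerivAt (fun x => -U2 x + c * U x - 2 * q x * U x) (G1 x) x)
    (hG1 : Continuous G1) :
    Integrable (fun x => G1 x * ψ x) ∧
    ∫ x, G1 x * ψ x = -∫ x, U x * (-(deriv (deriv (deriv ψ)) x) + c * deriv ψ x
      - 2 * q x * deriv ψ x) := by
  have hψ1 := (contDiff_infty_iff_deriv.1 hψ)
  have hψ2 := (contDiff_infty_iff_deriv.1 hψ1.2)
  have hψ3 := (contDiff_infty_iff_deriv.1 hψ2.2)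
  have hUc : Continuous U := continuous_iff_continuousAt.2 fun x => (hU1 x).continuousAt
  have hU1c : Continuous U1 := continuous_iff_continuousAt.2 fun x => (hU2 x).continuousAt
  have hU1s : HasCompactSupport U1 := by
    rw [show U1 = deriv U from funext fun x => (hU1 x).deriv.symm]; exact hU.deriv
  have hU2s : HasCompactSupport U2 := by
    rw [show U2 = deriv U1 from funext fun x => (hU2 x).deriv.symm]; exact hU1s.deriv
  have hGs : HasCompactSupport (fun x => -U2 x + c * U x - 2 * q x * U x) :=
    (hU2s.neg.add (hU.mul_left (f := fun _ => c))).sub (hU.mul_left (f := fun x => 2 * q x))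
  have hG1s : HasCompactSupport G1 := by
    rw [show G1 = deriv _ from funext fun x => (hG x).deriv.symm]; exact hGs.deriv
  refine ⟨(hG1.mul hψ.continuous).integrable_of_hasCompactSupport hG1s.mul_right, ?_⟩
  rw [integral_deriv_mul_of_compact hG hGs hG1 (fun x => (hψ1.1 x).hasDerivAt)
    hψ1.2.continuous]
  have e1 := integral_deriv_mul_of_compact hU2 hU1s hU2c (fun x => (hψ2.1 x).hasDerivAt)
    hψ2.2.continuous
  have e2 := integral_deriv_mul_of_compact hU1 hU hU1c (fun x => (hψ3.1 x).hasDerivAt)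
    hψ3.2.continuous
  have e3 : ∫ x, U2 x * deriv ψ x = ∫ x, U x * deriv (deriv (deriv ψ)) x := by
    rw [e1, e2, neg_neg]
  have i1 : Integrable (fun x => U2 x * deriv ψ x) :=
    (hU2c.mul hψ1.2.continuous).integrable_of_hasCompactSupport hU2s.mul_right
  have i2 : Integrable (fun x => U x * deriv (deriv (deriv ψ)) x) :=
    (hUc.mul hψ3.2.continuous).integrable_of_hasCompactSupport hU.mul_right
  have i3 : Integrable (fun x => U x * (c * deriv ψ x - 2 * q x * deriv ψ x)) :=
    (hUc.mul ((continuous_const.mul hψ1.2.continuous).sub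
      ((continuous_const.mul hq).mul hψ1.2.continuous))).integrable_of_hasCompactSupport
      hU.mul_right
  congr 1
  calc _ = ∫ x, (U x * (c * deriv ψ x - 2 * q x * deriv ψ x) - U2 x * deriv ψ x) := by
        congr 1; funext x; ring
    _ = ∫ x, (U x * (c * deriv ψ x - 2 * q x * deriv ψ x)
          - U x * deriv (deriv (deriv ψ)) x) := by
        rw [integral_sub i3 i1, integral_sub i3 i2, e3]
    _ = _ := by congr 1; funext x; ring

/-! ### Smooth functions of two variables -/

lemma hasDerivAt_fst {f : ℝ → ℝ → ℝ} (hf : ContDiff ℝ ∞ (fun p : ℝ × ℝ => f p.1 p.2))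
    (x y : ℝ) : HasDerivAt (fun s => f s y) (fderiv ℝ (fun p : ℝ × ℝ => f p.1 p.2) (x, y) (1, 0))
      x :=
  ((hf.differentiable (by simp) (x, y)).hasFDerivAt).comp_hasDerivAt (f := fun s : ℝ => (s, y)) x
    ((hasDerivAt_id x).prodMk (hasDerivAt_const x y))

lemma hasDerivAt_snd {f : ℝ → ℝ → ℝ} (hf : ContDiff ℝ ∞ (fun p : ℝ × ℝ => f p.1 p.2))
    (x y : ℝ) : HasDerivAt (f x) (fderiv ℝ (fun p : ℝ × ℝ => f p.1 p.2) (x, y) (0, 1)) y :=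
  ((hf.differentiable (by simp) (x, y)).hasFDerivAt).comp_hasDerivAt (f := fun s : ℝ => (x, s)) y
    ((hasDerivAt_const y x).prodMk (hasDerivAt_id y))

lemma contDiff_deriv_fst {f : ℝ → ℝ → ℝ} (hf : ContDiff ℝ ∞ (fun p : ℝ × ℝ => f p.1 p.2)) :
    ContDiff ℝ ∞ (fun p : ℝ × ℝ => deriv (fun s => f s p.2) p.1) := by
  simp only [(hasDerivAt_fst hf _ _).deriv]
  exact (hf.fderiv_right (by simp)).clm_apply contDiff_const

lemma contDiff_deriv_snd {f : ℝ → ℝ → ℝ} (hf : ContDiff ℝ ∞ (fun p : ℝ × ℝ => f p.1 p.2)) :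
    ContDiff ℝ ∞ (fun p : ℝ × ℝ => deriv (f p.1) p.2) := by
  simp only [(hasDerivAt_snd hf _ _).deriv]
  exact (hf.fderiv_right (by simp)).clm_apply contDiff_const

lemma continuous_section {f : ℝ → ℝ → ℝ} (hf : ContDiff ℝ ∞ (fun p : ℝ × ℝ => f p.1 p.2))
    (x : ℝ) : Continuous (f x) :=
  hf.continuous.comp (Continuous.prodMk_right x)

lemma continuous_integral_snd {f : ℝ → ℝ → ℝ}
    (hf : ContDiff ℝ ∞ (fun p : ℝ × ℝ => f p.1 p.2)) (a b : ℝ) :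
    Continuous fun x => ∫ y in a..b, f x y :=
  intervalIntegral.continuous_parametric_intervalIntegral_of_continuous' hf.continuous a b

lemma hasDerivAt_integral_snd {f : ℝ → ℝ → ℝ}
    (hf : ContDiff ℝ ∞ (fun p : ℝ × ℝ => f p.1 p.2)) (a b x : ℝ) :
    HasDerivAt (fun x => ∫ y in a..b, f x y) (∫ y in a..b, deriv (fun s => f s y) x) x := by
  have hf' := contDiff_deriv_fst hf
  -- the `x`-derivative is bounded on the compact set `[x-1,x+1] × [[a,b]]`
  obtain ⟨M, hM⟩ := ((isCompact_closedBall x 1).prod (isCompact_uIcc (a := a) (b := b))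
    ).exists_bound_of_continuousOn hf'.continuous.continuousOn
  refine (intervalIntegral.hasDerivAt_integral_of_dominated_loc_of_deriv_le
    (F := f) (F' := fun x y => deriv (fun s => f s y) x) (bound := fun _ => M)
    (Metric.closedBall_mem_nhds x one_pos)
    (Eventually.of_forall fun z => (continuous_section hf z).aestronglyMeasurable)
    ((continuous_section hf x).intervalIntegrable a b)
    (continuous_section (f := fun x y => deriv (fun s => f s y) x) hf' x).aestronglyMeasurable
    (ae_of_all _ fun t ht z hz => hM (z, t) ⟨hz, uIoc_subset_uIcc ht⟩)
    intervalIntegrable_const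
    (ae_of_all _ fun t _ z _ => ?_)).2
  exact (hasDerivAt_fst hf z t).differentiableAt.hasDerivAt

/-! ### The orthogonality identities -/

/-- For a smooth function `u` on `ℝ×T_L` that is compactly supported in `x`, the operator
`𝒜u = ∂ₓ(-Δu + c*·u - 2Q_{c*}u) + μ(u)·∂ₓQ_{c*}`, with
`μ(u) = (u, 𝕃_{c*}∂ₓ²Q_{c*})_{L²}/‖∂ₓQ_{c*}‖²_{L²}`, satisfies
`(𝒜u, ∂ₓQ_{c*})_{L²} = 0` and `(𝒜u, Q_{c*})_{L²} = 0` (the identities behind Lemma 3.1). -/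
theorem A_orthogonality (cstar L : ℝ) (hc : 0 < cstar) (hL : 0 < L)
    (u : ℝ → ℝ → ℝ)
    (hsmooth : ContDiff ℝ (⊤ : ℕ∞) (fun p : ℝ × ℝ => u p.1 p.2))
    (hper : ∀ x y : ℝ, u x (y + 2 * Real.pi * L) = u x y)
    (hsupp : ∃ R : ℝ, 0 < R ∧ ∀ x y : ℝ, R ≤ |x| → u x y = 0)
    (μ : ℝ)
    (hμ : μ = (∫ x : ℝ, ∫ y in (0 : ℝ)..(2 * Real.pi * L),
          u x y * (-(deriv (deriv (deriv (deriv (Q cstar)))) x)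
            + cstar * deriv (deriv (Q cstar)) x
            - 2 * Q cstar x * deriv (deriv (Q cstar)) x)) /
        (∫ x : ℝ, ∫ y in (0 : ℝ)..(2 * Real.pi * L), (deriv (Q cstar) x) ^ 2))
    (Au : ℝ → ℝ → ℝ)
    (hAu : ∀ x y : ℝ, Au x y =
      deriv (fun s =>
        -(deriv (deriv (fun r => u r y)) s + deriv (deriv (u s)) y)
          + cstar * u s y - 2 * Q cstar s * u s y) x
      + μ * deriv (Q cstar) x) :
    (∫ x : ℝ, ∫ y in (0 : ℝ)..(2 * Real.pi * L), Au x y * deriv (Q cstar) x) = 0 ∧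
    (∫ x : ℝ, ∫ y in (0 : ℝ)..(2 * Real.pi * L), Au x y * Q cstar x) = 0 := by
  have hS : 0 < 2 * Real.pi * L := by positivity
  set S := 2 * Real.pi * L with hSdef
  set ux : ℝ → ℝ → ℝ := fun x y => deriv (fun r => u r y) x with hux
  set uxx : ℝ → ℝ → ℝ := fun x y => deriv (fun r => ux r y) x with huxx
  set uyy : ℝ → ℝ → ℝ := fun x y => deriv (deriv (u x)) y with huyy
  set F : ℝ → ℝ → ℝ := fun s y =>
    -(uxx s y + uyy s y) + cstar * u s y - 2 * Q cstar s * u s y with hF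
  have cux : ContDiff ℝ ∞ (fun p : ℝ × ℝ => ux p.1 p.2) := contDiff_deriv_fst hsmooth
  have cuxx : ContDiff ℝ ∞ (fun p : ℝ × ℝ => uxx p.1 p.2) := contDiff_deriv_fst cux
  have cuy : ContDiff ℝ ∞ (fun p : ℝ × ℝ => deriv (u p.1) p.2) := contDiff_deriv_snd hsmooth
  have cuyy : ContDiff ℝ ∞ (fun p : ℝ × ℝ => uyy p.1 p.2) :=
    contDiff_deriv_snd (f := fun x y => deriv (u x) y) cuy
  have cF : ContDiff ℝ ∞ (fun p : ℝ × ℝ => F p.1 p.2) :=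
    ((cuxx.add cuyy).neg.add (contDiff_const.mul hsmooth)).sub
      ((contDiff_const.mul ((Q_contDiff cstar).comp contDiff_fst)).mul hsmooth)
  have cFx : ContDiff ℝ ∞ (fun p : ℝ × ℝ => deriv (fun s => F s p.2) p.1) :=
    contDiff_deriv_fst cF
  set U : ℝ → ℝ := fun x => ∫ y in (0:ℝ)..S, u x y with hU
  set G1 : ℝ → ℝ := fun x => ∫ y in (0:ℝ)..S, deriv (fun s => F s y) x with hG1
  have hyy : ∀ x, ∫ y in (0:ℝ)..S, uyy x y = 0 := by
    intro x
    have hd : ∀ y, HasDerivAt (deriv (u x)) (uyy x y) y := fun y =>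
      (hasDerivAt_snd (f := fun x y => deriv (u x) y) cuy x y).differentiableAt.hasDerivAt
    rw [intervalIntegral.integral_eq_sub_of_hasDerivAt (fun y _ => hd y)
      ((continuous_section cuyy x).intervalIntegrable 0 S)]
    have hp : (fun y => u x (y + S)) = u x := funext (hper x)
    have : deriv (u x) (0 + S) = deriv (u x) 0 := by
      rw [← deriv_comp_add_const (u x) S 0, hp]
    rw [zero_add] at this
    rw [this, sub_self]
  -- integrating over one period in `y` turns `F` into `-U'' + cU - 2QU`
  have hGF : (fun x => ∫ y in (0:ℝ)..S, F x y) =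
      fun x => -(∫ y in (0:ℝ)..S, uxx x y) + cstar * U x - 2 * Q cstar x * U x := by
    funext x
    have i1 := (continuous_section cuxx x).intervalIntegrable (μ := volume) 0 S
    have i2 := (continuous_section cuyy x).intervalIntegrable (μ := volume) 0 S
    have i3 := (continuous_section hsmooth x).intervalIntegrable (μ := volume) 0 S
    have i12 : IntervalIntegrable (fun y => -(uxx x y + uyy x y)) volume 0 S := (i1.add i2).neg
    simp only [hF, hU]
    rw [intervalIntegral.integral_sub (i12.add (i3.const_mul _)) (i3.const_mul _),
      intervalIntegral.integral_add i12 (i3.const_mul _),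
      intervalIntegral.integral_neg, intervalIntegral.integral_add i1 i2, hyy x,
      intervalIntegral.integral_const_mul, intervalIntegral.integral_const_mul, add_zero]
  have hUs : HasCompactSupport U := by
    obtain ⟨R, -, hR⟩ := hsupp
    refine HasCompactSupport.intro (isCompact_Icc (a := -R) (b := R)) fun x hx => ?_
    have hx' : R ≤ |x| := by
      by_contra h
      exact hx (abs_le.1 (not_le.1 h).le)
    simp [hU, hR x _ hx']
  have hw : ∀ ψ : ℝ → ℝ, ContDiff ℝ ∞ ψ → _ := fun ψ hψ =>
    weak_form (c := cstar) hψ (Q_contDiff cstar).continuous hUs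
      (hasDerivAt_integral_snd hsmooth 0 S) (hasDerivAt_integral_snd cux 0 S)
      (continuous_integral_snd cuxx 0 S)
      (fun x => hGF ▸ hasDerivAt_integral_snd cF 0 S x)
      (continuous_integral_snd (f := fun x y => deriv (fun s => F s y) x) cFx 0 S)
  -- the inner integral is `G'ψ + 2πL·μ·Q'ψ`
  have hinner : ∀ ψ : ℝ → ℝ, ∀ x, ∫ y in (0:ℝ)..S, Au x y * ψ x =
      G1 x * ψ x + μ * S * (deriv (Q cstar) x * ψ x) := by
    intro ψ x
    have hA : ∀ y, Au x y = deriv (fun s => F s y) x + μ * deriv (Q cstar) x := hAu x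
    simp only [hA]
    rw [intervalIntegral.integral_mul_const, intervalIntegral.integral_add
      ((continuous_section (f := fun x y => deriv (fun s => F s y) x) cFx x).intervalIntegrable 0 S)
      intervalIntegrable_const]
    simp only [intervalIntegral.integral_const, smul_eq_mul, hG1]
    ring
  simp only [hinner]
  constructor
  · obtain ⟨i, e⟩ := hw (deriv (Q cstar)) (contDiff_infty_iff_deriv.1 (Q_contDiff cstar)).2
    rw [integral_add i ((deriv_Q_sq_integrable hc).const_mul _), e, MeasureTheory.integral_const_mul]
    have hpos := integral_deriv_Q_sq_pos hc
    simp only [intervalIntegral.integral_mul_const, intervalIntegral.integral_const, smul_eq_mul,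
      sub_zero, pow_two] at hμ
    simp only [mul_assoc S] at hμ
    rw [MeasureTheory.integral_const_mul, eq_div_iff (mul_pos hS hpos).ne'] at hμ
    linear_combination hμ
  · obtain ⟨i, e⟩ := hw (Q cstar) (Q_contDiff cstar)
    rw [integral_add i ((deriv_Q_mul_Q_integrable hc).const_mul _), e, MeasureTheory.integral_const_mul,
      integral_deriv_Q_mul_Q]
    simp [linearized_deriv_Q hc]
end
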